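/- arXiv:1601.05875 — 2 statements merged into one kernel-verified Lean document; each statement's English description precedes it below -/
import Mathlib

section
/- Let $A \subseteq \mathbb{R}^n$ be a convex set containing $0$, let $1 \le m \le n$, and let $\tilde{A} = \{x_{m+1}^n \in \mathbb{R}^{n-m} : (0^m, x_{m+1}^n) \in A\}$ be the slice of $A$ through the origin. Then $V_n(A) \ge \binom{n}{m}^{-1} \cdot V_{n-m}(\tilde{A}) \cdot V_m(P_{[1:m]}(A))$, where $P_{[1:m]}(A)$ is the projection of $A$ onto the first $m$ coordinates. -/
open MeasureTheory Set ENNReal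

/-! Averaging the volumes of the dilates `s • B` of a `d`-dimensional set `B` against
`exp (-s) ds` over `s > 0` multiplies the volume of `B` by `d!`. With `S` the slice of `A` over `0`
and `P` its projection, the inequality reads `(m! * vol P) * (k! * vol S) ≤ (m + k)! * vol A`, a
comparison of such averages. Over a point `x ∈ t • P` and for `s > t`, convexity puts a translate of
`(s - t) • S` in the fibre of `s • A`, so the average of the volumes of these fibres is at least
`∫ s in (t, ∞), exp (-s) * (s - t) ^ k * vol S = exp (-t) * (k! * vol S)`. Let `τ x` be the infimum
of the admissible `t`; since `exp (-τ x)` is at least the integral of `exp (-t)` over the `t > 0`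
with `x ∈ t • P`, its integral over `x` is at least `m! * vol P`. -/

section ExponentialIntegrals

open scoped Nat

lemma lintegral_Ioi_zero_exp_neg_mul_pow (n : ℕ) :
    ∫⁻ s in Ioi (0 : ℝ), ENNReal.ofReal (Real.exp (-s) * s ^ n) = n ! := by
  have hpow : ∀ s : ℝ, Real.exp (-s) * s ^ n = Real.exp (-s) * s ^ ((n + 1 : ℝ) - 1) := fun s ↦ by
    rw [add_sub_cancel_right, Real.rpow_natCast]
  simp_rw [hpow]
  rw [← ofReal_integral_eq_lintegral_ofReal (Real.GammaIntegral_convergent (by positivity)),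
    ← Real.Gamma_eq_integral (by positivity), Real.Gamma_nat_eq_factorial, ENNReal.ofReal_natCast]
  filter_upwards [ae_restrict_mem measurableSet_Ioi] with s (hs : 0 < s)
  exact (by positivity : 0 ≤ Real.exp (-s) * s ^ ((n + 1 : ℝ) - 1))

lemma lintegral_Ioi_exp_neg_mul_sub_pow (n : ℕ) (t : ℝ) :
    ∫⁻ s in Ioi t, ENNReal.ofReal (Real.exp (-s) * (s - t) ^ n)
      = ENNReal.ofReal (Real.exp (-t)) * n ! := by
  calc ∫⁻ s in Ioi t, ENNReal.ofReal (Real.exp (-s) * (s - t) ^ n)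
      = ∫⁻ s in Ioi 0, ENNReal.ofReal (Real.exp (-(s + t)) * s ^ n) := by
        rw [← lintegral_indicator measurableSet_Ioi, ← lintegral_indicator measurableSet_Ioi,
          ← lintegral_add_right_eq_self _ t]
        simp [indicator_apply]
    _ = ∫⁻ s in Ioi 0,
          ENNReal.ofReal (Real.exp (-t)) * ENNReal.ofReal (Real.exp (-s) * s ^ n) := by
        simp_rw [← ENNReal.ofReal_mul (Real.exp_pos _).le, neg_add, Real.exp_add]
        congr! 3
        ring
    _ = ENNReal.ofReal (Real.exp (-t)) * n ! := by
        rw [lintegral_const_mul _ (by fun_prop), lintegral_Ioi_zero_exp_neg_mul_pow]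

lemma setLIntegral_exp_neg_le_iSup (T : Set ℝ) :
    ∫⁻ t in T, ENNReal.ofReal (Real.exp (-t)) ≤ ⨆ t ∈ T, ENNReal.ofReal (Real.exp (-t)) := by
  rcases T.eq_empty_or_nonempty with rfl | ⟨t₀, ht₀⟩
  · simp
  set M := ⨆ t ∈ T, ENNReal.ofReal (Real.exp (-t))
  have le_M : ∀ t ∈ T, ENNReal.ofReal (Real.exp (-t)) ≤ M := fun t ht ↦
    le_iSup₂ (f := fun t (_ : t ∈ T) ↦ ENNReal.ofReal (Real.exp (-t))) t ht
  by_cases hM : M = ∞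
  · simp [hM]
  have M_pos : 0 < M.toReal :=
    ENNReal.toReal_pos ((ENNReal.ofReal_pos.2 (Real.exp_pos _)).trans_le (le_M t₀ ht₀)).ne' hM
  have T_subset : T ⊆ Ici (-Real.log M.toReal) := fun t ht ↦ by
    rw [mem_Ici, neg_le, Real.le_log_iff_exp_le M_pos]
    exact (ENNReal.ofReal_le_iff_le_toReal hM).1 (le_M t ht)
  calc ∫⁻ t in T, ENNReal.ofReal (Real.exp (-t))
      ≤ ∫⁻ t in Ioi (-Real.log M.toReal), ENNReal.ofReal (Real.exp (-t)) := by
        rw [restrict_Ioi_eq_restrict_Ici]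
        exact lintegral_mono_set T_subset
    _ = M := by
        simpa [Real.exp_log M_pos, ENNReal.ofReal_toReal hM] using
          lintegral_Ioi_exp_neg_mul_sub_pow 0 (-Real.log M.toReal)

end ExponentialIntegrals

section Dilation

open scoped Nat
open Module

variable {E : Type*} [NormedAddCommGroup E] [NormedSpace ℝ E] [FiniteDimensional ℝ E]
  [MeasurableSpace E] [BorelSpace E] (μ : Measure E) [μ.IsAddHaarMeasure]

lemma lintegral_comp_inv_smul (f : E → ℝ≥0∞) {s : ℝ} (hs : s ≠ 0) :
    ∫⁻ x, f (s⁻¹ • x) ∂μ = ENNReal.ofReal |s ^ finrank ℝ E| * ∫⁻ x, f x ∂μ := by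
  have hmap := Measure.map_addHaar_smul μ (inv_ne_zero hs)
  rw [inv_pow, inv_inv] at hmap
  rw [← smul_eq_mul, ← lintegral_smul_measure, ← hmap,
    (measurableEmbedding_const_smul₀ (inv_ne_zero hs)).lintegral_map]

-- The weight `s ^ k` lets `f x` be the volume of a `k`-dimensional fibre over `x`, which the
-- dilation by `s` scales as well.
lemma lintegral_lintegral_exp_neg_mul_pow_mul_comp_inv_smul (k : ℕ) {f : E → ℝ≥0∞}
    (hf : Measurable f) :
    ∫⁻ x, (∫⁻ s in Ioi (0 : ℝ), ENNReal.ofReal (Real.exp (-s) * s ^ k) * f (s⁻¹ • x)) ∂μ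
      = (finrank ℝ E + k)! * ∫⁻ x, f x ∂μ := by
  rw [lintegral_lintegral_swap (by fun_prop), ← lintegral_Ioi_zero_exp_neg_mul_pow,
    ← lintegral_mul_const _ (by fun_prop)]
  refine setLIntegral_congr_fun measurableSet_Ioi fun s (hs : 0 < s) ↦ ?_
  rw [lintegral_const_mul _ (by fun_prop), lintegral_comp_inv_smul μ f hs.ne',
    abs_of_pos (pow_pos hs _), ← mul_assoc, ← ENNReal.ofReal_mul (by positivity), pow_add,
    mul_assoc, mul_comm (s ^ k)]

lemma factorial_mul_measure_le_lintegral_setLIntegral_exp_neg {P : Set E}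
    (hP : NullMeasurableSet P μ) :
    (finrank ℝ E)! * μ P
      ≤ ∫⁻ x, (∫⁻ t in {t : ℝ | 0 < t ∧ t⁻¹ • x ∈ P}, ENNReal.ofReal (Real.exp (-t))) ∂μ := by
  obtain ⟨U, hUP, hU, hμU⟩ := hP.exists_measurable_subset_ae_eq
  calc (finrank ℝ E)! * μ P
      = ∫⁻ x, (∫⁻ t in Ioi (0 : ℝ),
          ENNReal.ofReal (Real.exp (-t)) * U.indicator 1 (t⁻¹ • x)) ∂μ := by
        have := lintegral_lintegral_exp_neg_mul_pow_mul_comp_inv_smul μ 0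
          (measurable_one.indicator hU)
        simpa [lintegral_indicator_one hU, measure_congr hμU] using this.symm
    _ ≤ ∫⁻ x, (∫⁻ t in {t : ℝ | 0 < t ∧ t⁻¹ • x ∈ P}, ENNReal.ofReal (Real.exp (-t))) ∂μ := by
        refine lintegral_mono fun x ↦ ?_
        rw [← lintegral_indicator measurableSet_Ioi]
        refine (lintegral_mono fun t ↦ ?_).trans (lintegral_indicator_le _ _)
        by_cases ht : 0 < t <;> by_cases hx : t⁻¹ • x ∈ U
        · simp [ht, hx, hUP hx]
        all_goals simp [ht, hx]

end Dilation

section Fiber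

open scoped Nat Pointwise
open Module

lemma lintegral_lintegral_exp_neg_mul_pow_mul_measure_fiber_le {E F : Type*}
    [NormedAddCommGroup E] [NormedSpace ℝ E] [FiniteDimensional ℝ E] [MeasurableSpace E]
    [BorelSpace E] [MeasurableSpace F] (μ : Measure E) [μ.IsAddHaarMeasure] (ν : Measure F)
    [SFinite ν] (k : ℕ) (A : Set (E × F)) :
    ∫⁻ x, (∫⁻ s in Ioi (0 : ℝ),
        ENNReal.ofReal (Real.exp (-s) * s ^ k) * ν (Prod.mk (s⁻¹ • x) ⁻¹' A)) ∂μ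
      ≤ (finrank ℝ E + k)! * μ.prod ν A := by
  have hB : MeasurableSet (toMeasurable (μ.prod ν) A) := measurableSet_toMeasurable _ _
  rw [← measure_toMeasurable A, Measure.prod_apply hB,
    ← lintegral_lintegral_exp_neg_mul_pow_mul_comp_inv_smul μ k (measurable_measure_prodMk_left hB)]
  gcongr
  exact subset_toMeasurable _ _

variable {E F : Type*} [AddCommGroup E] [Module ℝ E] [NormedAddCommGroup F] [NormedSpace ℝ F]
  [FiniteDimensional ℝ F] [MeasurableSpace F] [BorelSpace F] (ν : Measure F) [ν.IsAddHaarMeasure]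
  {A : Set (E × F)}

lemma ofReal_sub_pow_mul_measure_fiber_zero_le (hA : Convex ℝ A) {x : E} {s t : ℝ} (ht : 0 < t)
    (hts : t ≤ s) (hx : t⁻¹ • x ∈ Prod.fst '' A) :
    ENNReal.ofReal ((s - t) ^ finrank ℝ F) * ν (Prod.mk 0 ⁻¹' A)
      ≤ ENNReal.ofReal (s ^ finrank ℝ F) * ν (Prod.mk (s⁻¹ • x) ⁻¹' A) := by
  obtain ⟨⟨p, q⟩, hpq, rfl : p = t⁻¹ • x⟩ := hx
  have hs : 0 < s := ht.trans_le hts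
  have h_subset : (t • q) +ᵥ ((s - t) • (Prod.mk 0 ⁻¹' A)) ⊆ s • (Prod.mk (s⁻¹ • x) ⁻¹' A) := by
    rintro _ ⟨_, ⟨y, hy, rfl⟩, rfl⟩
    have h_comb : (t / s) • (t⁻¹ • x, q) + ((s - t) / s) • ((0 : E), y) ∈ A :=
      hA hpq hy (by positivity) (div_nonneg (sub_nonneg.2 hts) hs.le) (by field_simp; ring)
    rw [mem_smul_set_iff_inv_smul_mem₀ hs.ne', mem_preimage]
    convert h_comb using 1
    ext1
    · simp [smul_smul, div_eq_inv_mul, ht.ne']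
    · simp [smul_smul, div_eq_inv_mul]
  simpa [measure_vadd, Measure.addHaar_smul, abs_of_nonneg, hs.le, sub_nonneg.2 hts] using
    measure_mono (μ := ν) h_subset

lemma setLIntegral_exp_neg_mul_measure_fiber_zero_le (hA : Convex ℝ A) (x : E) :
    (∫⁻ t in {t : ℝ | 0 < t ∧ t⁻¹ • x ∈ Prod.fst '' A}, ENNReal.ofReal (Real.exp (-t)))
        * ((finrank ℝ F)! * ν (Prod.mk 0 ⁻¹' A))
      ≤ ∫⁻ s in Ioi (0 : ℝ), ENNReal.ofReal (Real.exp (-s) * s ^ finrank ℝ F)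
          * ν (Prod.mk (s⁻¹ • x) ⁻¹' A) := by
  refine (mul_le_mul_left (setLIntegral_exp_neg_le_iSup _) _).trans ?_
  simp_rw [ENNReal.iSup_mul]
  refine iSup₂_le fun t ⟨ht, hx⟩ ↦ ?_
  rw [← mul_assoc, ← lintegral_Ioi_exp_neg_mul_sub_pow, ← lintegral_mul_const _ (by fun_prop)]
  refine (setLIntegral_mono' measurableSet_Ioi fun s (hs : t < s) ↦ ?_).trans
    (lintegral_mono_set (Ioi_subset_Ioi ht.le))
  simp_rw [ENNReal.ofReal_mul (Real.exp_pos _).le, mul_assoc]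
  gcongr _ * ?_
  exact ofReal_sub_pow_mul_measure_fiber_zero_le ν hA ht hs.le hx

end Fiber

section SliceProjection

open scoped Nat
open Module

variable {E F : Type*} [NormedAddCommGroup E] [NormedSpace ℝ E] [FiniteDimensional ℝ E]
  [MeasurableSpace E] [BorelSpace E] [NormedAddCommGroup F] [NormedSpace ℝ F]
  [FiniteDimensional ℝ F] [MeasurableSpace F] [BorelSpace F] (μ : Measure E) [μ.IsAddHaarMeasure]
  (ν : Measure F) [ν.IsAddHaarMeasure] {A : Set (E × F)}

lemma measure_image_fst_mul_measure_fiber_zero_le (hA : Convex ℝ A) :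
    ((finrank ℝ E)! * μ (Prod.fst '' A)) * ((finrank ℝ F)! * ν (Prod.mk 0 ⁻¹' A))
      ≤ (finrank ℝ E + finrank ℝ F)! * μ.prod ν A := by
  have hP : Convex ℝ (Prod.fst '' A) := hA.linear_image (LinearMap.fst ℝ E F)
  calc _ ≤ (∫⁻ x, (∫⁻ t in {t : ℝ | 0 < t ∧ t⁻¹ • x ∈ Prod.fst '' A},
            ENNReal.ofReal (Real.exp (-t))) ∂μ) * ((finrank ℝ F)! * ν (Prod.mk 0 ⁻¹' A)) := by
        gcongr
        exact factorial_mul_measure_le_lintegral_setLIntegral_exp_neg μ (hP.nullMeasurableSet μ)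
    _ ≤ ∫⁻ x, (∫⁻ t in {t : ℝ | 0 < t ∧ t⁻¹ • x ∈ Prod.fst '' A},
            ENNReal.ofReal (Real.exp (-t))) * ((finrank ℝ F)! * ν (Prod.mk 0 ⁻¹' A)) ∂μ :=
        lintegral_mul_const_le _ _
    _ ≤ ∫⁻ x, (∫⁻ s in Ioi (0 : ℝ), ENNReal.ofReal (Real.exp (-s) * s ^ finrank ℝ F)
            * ν (Prod.mk (s⁻¹ • x) ⁻¹' A)) ∂μ :=
        lintegral_mono fun x ↦ setLIntegral_exp_neg_mul_measure_fiber_zero_le ν hA x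
    _ ≤ (finrank ℝ E + finrank ℝ F)! * μ.prod ν A :=
        lintegral_lintegral_exp_neg_mul_pow_mul_measure_fiber_le μ ν _ A

lemma measure_image_fst_mul_measure_fiber_le (hA : Convex ℝ A) (x₀ : E) :
    ((finrank ℝ E)! * μ (Prod.fst '' A)) * ((finrank ℝ F)! * ν (Prod.mk x₀ ⁻¹' A))
      ≤ (finrank ℝ E + finrank ℝ F)! * μ.prod ν A := by
  have h_image : Prod.fst '' ((fun z : E × F ↦ (x₀, 0) + z) ⁻¹' A)
      = (fun x ↦ x₀ + x) ⁻¹' (Prod.fst '' A) := by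
    ext x
    simp
  have h_fiber : Prod.mk 0 ⁻¹' ((fun z : E × F ↦ (x₀, 0) + z) ⁻¹' A) = Prod.mk x₀ ⁻¹' A := by
    ext y
    simp
  simpa only [h_image, h_fiber, measure_preimage_add] using
    measure_image_fst_mul_measure_fiber_zero_le μ ν (hA.translate_preimage_right (x₀, 0))

theorem convex_slice_projection_volume_general (hA : Convex ℝ A) (x₀ : E) :
    ((finrank ℝ E + finrank ℝ F).choose (finrank ℝ E) : ℝ≥0∞)⁻¹
        * ν {y | (x₀, y) ∈ A} * μ (Prod.fst '' A)
      ≤ μ.prod ν A := by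
  set m := finrank ℝ E
  set k := finrank ℝ F
  have h_factorial : ((m + k)! : ℝ≥0∞) = (m ! * k !) * (m + k).choose m := by
    rw [← Nat.add_choose_mul_factorial_mul_factorial, Nat.choose_symm_add]
    push_cast
    ring
  have h_choose_ne_zero : ((m + k).choose m : ℝ≥0∞) ≠ 0 :=
    Nat.cast_ne_zero.2 (Nat.choose_pos le_self_add).ne'
  have h_le : (m ! * k ! : ℝ≥0∞) * (μ (Prod.fst '' A) * ν (Prod.mk x₀ ⁻¹' A))
      ≤ (m ! * k !) * ((m + k).choose m * μ.prod ν A) := by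
    rw [← mul_assoc _ _ (μ.prod ν A), ← h_factorial, mul_mul_mul_comm]
    exact measure_image_fst_mul_measure_fiber_le μ ν hA x₀
  rw [mul_assoc, mul_comm (ν _), ENNReal.inv_mul_le_iff h_choose_ne_zero (by finiteness)]
  exact (ENNReal.mul_le_mul_iff_right (by positivity) (by finiteness)).1 h_le

end SliceProjection

theorem convex_slice_projection_volume (m k : ℕ) (hm : 1 ≤ m)
    (A : Set ((Fin m → ℝ) × (Fin k → ℝ))) (hconv : Convex ℝ A) (h0 : (0 : (Fin m → ℝ) × (Fin k → ℝ)) ∈ A) :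
    volume A ≥ (((m + k).choose m : ℝ≥0∞))⁻¹
      * volume {y : Fin k → ℝ | ((0 : Fin m → ℝ), y) ∈ A}
      * volume (Prod.fst '' A) := by
  simpa [Measure.volume_eq_prod] using
    convex_slice_projection_volume_general volume volume hconv 0
end

section
/- For any log-concave probability density $f$ of $X^n$ on $\mathbb{R}^n$ and $1 \le m \le n$, the conditional differential entropy satisfies $0 \le h(X_{m+1}^n \mid X^m) + \log_2\big(\int_{\mathbb{R}^m} \sup_{x_{m+1}^n} f(x^m, x_{m+1}^n)\, dx^m\big) \le n \log_2 e + \log_2 \binom{n}{m}$. -/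
open MeasureTheory Set

/-- A density is log-concave if `f(λx+(1-λ)y) ≥ f(x)^λ f(y)^(1-λ)`. -/
def LogConcaveDens {E : Type*} [AddCommGroup E] [Module ℝ E] (f : E → ℝ) : Prop :=
  ∀ x y : E, ∀ l : ℝ, l ∈ Icc (0 : ℝ) 1 →
    f (l • x + (1 - l) • y) ≥ f x ^ l * f y ^ (1 - l)

/-!
Lower bound: Gibbs' inequality on each fibre, against the envelope `x ↦ ⨆ y, f (x, y)` normalised
to a probability density.

Upper bound: let `S` be the integral of the envelope, `p` the marginal density of `x`, and `m` and
`N` the dimensions of the `x`-space and of the whole space. The superlevel sets of `f` are convex,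
so the Rogers–Shephard inequality bounds (projection) × (section over `x₀`) by `N.choose m` times
their volume. Projections and sections both shrink as the level grows, so Chebyshev's integral
inequality on `(0, sup f)` turns these bounds into `S * p x₀ ≤ (sup f) * N.choose m` for every
`x₀`, whence `-h(X) ≤ log (sup f) + log (N.choose m) - log S`. It remains to see
`log (sup f) ≤ N - h(X, Y)` (in nats): for a point `z`, log-concavity bounds `f` at
`l • x + (1 - l) • z` below by `f x * (1 + (1 - l) * (log (f z) - log (f x)))`; integrate over `x`
and let `l → 1`.
-/

open Module ProbabilityTheory
open scoped ENNReal

section BetaLayerCake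

variable {α : Type*} [MeasurableSpace α] {μ : Measure α} {m k : ℕ}

lemma one_div_beta_natCast_add_one (hk : 0 < k) :
    1 / beta k (m + 1) = k * (m + k).choose m := by
  obtain ⟨j, rfl⟩ := Nat.exists_eq_add_of_le' hk
  have hΓ : Real.Gamma (((j + 1 : ℕ) : ℝ) + (m + 1)) = ((m + (j + 1)).factorial : ℝ) := by
    rw [← Real.Gamma_nat_eq_factorial]
    push_cast
    ring_nf
  rw [beta, hΓ, Real.Gamma_nat_eq_factorial, Nat.cast_succ, Real.Gamma_nat_eq_factorial,
    Nat.cast_add_choose ℝ, Nat.factorial_succ j]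
  push_cast
  field_simp

-- Integrating `hp` against the `Beta(k, m + 1)` density, a probability density in `c`, turns its
-- right-hand side into the layer-cake formula for `∫ h ^ k`.
lemma le_choose_mul_lintegral_pow_of_forall_le_measure (hk : 0 < k) {p : ℝ≥0∞} {h : α → ℝ}
    (hh : AEMeasurable h μ) (hnn : 0 ≤ h)
    (hp : ∀ c ∈ Ioo (0 : ℝ) 1, ENNReal.ofReal ((1 - c) ^ m) * p ≤ μ {x | c ≤ h x}) :
    p ≤ (m + k).choose m * ∫⁻ x, ENNReal.ofReal (h x ^ k) ∂μ := by
  have hk' : (0 : ℝ) < k := mod_cast hk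
  have hdensity : ∀ c ∈ Ioo (0 : ℝ) 1,
      ENNReal.ofReal (1 / beta k (m + 1) * c ^ ((k : ℝ) - 1) * (1 - c) ^ ((m : ℝ) + 1 - 1)) * p ≤
        (m + k).choose m * k * (μ {x | c ≤ h x} * ENNReal.ofReal (c ^ ((k : ℝ) - 1))) := by
    intro c hc
    have hc0 : 0 ≤ c ^ ((k : ℝ) - 1) := Real.rpow_nonneg hc.1.le _
    rw [one_div_beta_natCast_add_one hk, add_sub_cancel_right, Real.rpow_natCast,
      ENNReal.ofReal_mul (by positivity), ENNReal.ofReal_mul (by positivity),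
      ENNReal.ofReal_mul (by positivity), ENNReal.ofReal_natCast, ENNReal.ofReal_natCast]
    calc _ = (m + k).choose m * k *
          (ENNReal.ofReal ((1 - c) ^ m) * p * ENNReal.ofReal (c ^ ((k : ℝ) - 1))) := by ring
      _ ≤ _ := by gcongr; exact hp c hc
  calc p = (∫⁻ c in Ioo (0 : ℝ) 1, ENNReal.ofReal
            (1 / beta k (m + 1) * c ^ ((k : ℝ) - 1) * (1 - c) ^ ((m : ℝ) + 1 - 1))) * p := by
        rw [← lintegral_betaPDF, lintegral_betaPDF_eq_one hk' (by positivity), one_mul]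
    _ = ∫⁻ c in Ioo (0 : ℝ) 1, ENNReal.ofReal
            (1 / beta k (m + 1) * c ^ ((k : ℝ) - 1) * (1 - c) ^ ((m : ℝ) + 1 - 1)) * p :=
        (lintegral_mul_const _ (by fun_prop)).symm
    _ ≤ ∫⁻ c in Ioo (0 : ℝ) 1,
          (m + k).choose m * k * (μ {x | c ≤ h x} * ENNReal.ofReal (c ^ ((k : ℝ) - 1))) :=
        setLIntegral_mono' measurableSet_Ioo hdensity
    _ ≤ ∫⁻ c in Ioi (0 : ℝ),
          (m + k).choose m * k * (μ {x | c ≤ h x} * ENNReal.ofReal (c ^ ((k : ℝ) - 1))) :=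
        lintegral_mono_set Ioo_subset_Ioi_self
    _ = (m + k).choose m * ∫⁻ x, ENNReal.ofReal (h x ^ k) ∂μ := by
        rw [lintegral_const_mul' _ _ (by finiteness), mul_assoc]
        simp_rw [← Real.rpow_natCast]
        rw [lintegral_rpow_eq_lintegral_meas_le_mul μ (ae_of_all _ hnn) hh hk',
          ENNReal.ofReal_natCast]

lemma mul_le_choose_mul_lintegral_of_forall_le_measure (hk : 0 < k) {p V : ℝ≥0∞} {G : α → ℝ≥0∞}
    (hG : AEMeasurable G μ)
    (hp : ∀ c ∈ Ioo (0 : ℝ) 1,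
      ENNReal.ofReal ((1 - c) ^ m) * p ≤ μ {x | ENNReal.ofReal (c ^ k) * V ≤ G x}) :
    p * V ≤ (m + k).choose m * ∫⁻ x, G x ∂μ := by
  -- `V` may be infinite, so it is approximated by `v < V`, and `G` is truncated at height `v`.
  refine ENNReal.mul_le_of_forall_lt fun p' hp' v hv ↦ ?_
  rcases eq_or_ne v 0 with rfl | hv0
  · simp
  have hvtop : v ≠ ⊤ := hv.ne_top
  set u : α → ℝ := fun x ↦ (min (G x) v / v).toReal ^ (k : ℝ)⁻¹
  have hu0 : 0 ≤ u := fun x ↦ Real.rpow_nonneg ENNReal.toReal_nonneg _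
  have hu_pow (x : α) : ENNReal.ofReal (u x ^ k) = min (G x) v / v := by
    rw [Real.rpow_inv_natCast_pow ENNReal.toReal_nonneg hk.ne', ENNReal.ofReal_toReal]
    exact ENNReal.div_ne_top ((min_le_right _ _).trans_lt hvtop.lt_top).ne hv0
  have hlevel (c : ℝ) (hc : c ∈ Ioo (0 : ℝ) 1) :
      {x | ENNReal.ofReal (c ^ k) * V ≤ G x} ⊆ {x | c ≤ u x} := by
    intro x hx
    rw [mem_ofPred_eq, ← pow_le_pow_iff_left₀ hc.1.le (hu0 x) hk.ne',
      ← ENNReal.ofReal_le_ofReal_iff (pow_nonneg (hu0 x) k), hu_pow,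
      ENNReal.le_div_iff_mul_le (.inl hv0) (.inl hvtop)]
    exact le_min (le_trans (by gcongr) hx)
      (mul_le_of_le_one_left' (ENNReal.ofReal_le_one.2 (pow_le_one₀ hc.1.le hc.2.le)))
  calc p' * v
      ≤ ((m + k).choose m * ∫⁻ x, ENNReal.ofReal (u x ^ k) ∂μ) * v := by
        gcongr
        refine le_choose_mul_lintegral_pow_of_forall_le_measure hk (by fun_prop) hu0 fun c hc ↦ ?_
        calc ENNReal.ofReal ((1 - c) ^ m) * p'
            ≤ ENNReal.ofReal ((1 - c) ^ m) * p := by gcongr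
          _ ≤ μ {x | c ≤ u x} := (hp c hc).trans (measure_mono (hlevel c hc))
    _ = (m + k).choose m * ∫⁻ x, min (G x) v / v * v ∂μ := by
        simp_rw [mul_assoc, lintegral_mul_const' _ _ hvtop, hu_pow]
    _ ≤ (m + k).choose m * ∫⁻ x, G x ∂μ := by
        gcongr with x
        exact (ENNReal.mul_le_of_le_div le_rfl).trans (min_le_left _ _)

end BetaLayerCake

section RogersShephard

variable {F : Type*} [NormedAddCommGroup F] [NormedSpace ℝ F] [FiniteDimensional ℝ F]
  [MeasurableSpace F] [BorelSpace F] {ν : Measure F} [ν.IsAddHaarMeasure]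

lemma pow_mul_measure_section_le_measure_section_homothety {E : Type*} [AddCommGroup E]
    [Module ℝ E] {K : Set (E × F)} (hK : Convex ℝ K) {x x₀ : E} (hx : x ∈ Prod.fst '' K) {c : ℝ}
    (hc : c ∈ Icc (0 : ℝ) 1) :
    ENNReal.ofReal (c ^ finrank ℝ F) * ν (Prod.mk x₀ ⁻¹' K) ≤
      ν (Prod.mk (AffineMap.homothety x₀ (1 - c) x) ⁻¹' K) := by
  obtain ⟨⟨x, y⟩, hxy, rfl⟩ := hx
  rw [← abs_of_nonneg (pow_nonneg hc.1 _), ← Measure.addHaar_image_homothety ν y]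
  refine measure_mono ?_
  rintro _ ⟨z, hz, rfl⟩
  have hcomb := hK hxy hz (sub_nonneg.2 hc.2) hc.1 (sub_add_cancel 1 c)
  rw [mem_preimage]
  convert hcomb using 1
  ext <;> simp [AffineMap.homothety_apply] <;> module

variable {E : Type*} [NormedAddCommGroup E] [NormedSpace ℝ E] [FiniteDimensional ℝ E]
  [MeasurableSpace E] [BorelSpace E] {μ : Measure E} [μ.IsAddHaarMeasure] {K : Set (E × F)}

lemma pow_mul_measure_image_fst_le_measure_setOf (hK : Convex ℝ K) (x₀ : E) {c : ℝ}
    (hc : c ∈ Icc (0 : ℝ) 1) :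
    ENNReal.ofReal ((1 - c) ^ finrank ℝ E) * μ (Prod.fst '' K) ≤
      μ {x | ENNReal.ofReal (c ^ finrank ℝ F) * ν (Prod.mk x₀ ⁻¹' K) ≤ ν (Prod.mk x ⁻¹' K)} := by
  rw [← abs_of_nonneg (pow_nonneg (sub_nonneg.2 hc.2) _),
    ← Measure.addHaar_image_homothety μ x₀]
  refine measure_mono ?_
  rintro _ ⟨x, hx, rfl⟩
  exact pow_mul_measure_section_le_measure_section_homothety hK hx hc

theorem measure_image_fst_mul_measure_section_le (hK : Convex ℝ K) (hKm : MeasurableSet K)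
    (x₀ : E) :
    μ (Prod.fst '' K) * ν (Prod.mk x₀ ⁻¹' K) ≤
      (finrank ℝ E + finrank ℝ F).choose (finrank ℝ E) * μ.prod ν K := by
  rcases (finrank ℝ F).eq_zero_or_pos with hF | hF
  · have : Subsingleton F := finrank_zero_iff.1 hF
    have hprod : (Prod.fst '' K) ×ˢ univ = K := by
      ext ⟨x, y⟩
      simp [Subsingleton.elim _ y]
    calc μ (Prod.fst '' K) * ν (Prod.mk x₀ ⁻¹' K)
        ≤ μ (Prod.fst '' K) * ν univ := by gcongr; exact subset_univ _
      _ = μ.prod ν K := by rw [← Measure.prod_prod, hprod]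
      _ = _ := by simp [hF]
  · rw [Measure.prod_apply hKm]
    exact mul_le_choose_mul_lintegral_of_forall_le_measure hF
      (measurable_measure_prodMk_left hKm).aemeasurable
      fun c hc ↦ pow_mul_measure_image_fst_le_measure_setOf hK x₀ (Ioo_subset_Icc_self hc)

end RogersShephard

section Chebyshev

variable {α : Type*} [MeasurableSpace α] {μ : Measure α}

lemma lintegral_mul_lintegral_le_measure_univ_mul_of_monovary {p q : α → ℝ≥0∞}
    (hp : AEMeasurable p μ) (hq : AEMeasurable q μ) (hpq : Monovary p q) :
    (∫⁻ t, p t ∂μ) * ∫⁻ t, q t ∂μ ≤ μ univ * ∫⁻ t, p t * q t ∂μ := by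
  have rearrangement {a b c d : ℝ≥0∞} (hab : a ≤ b) (hcd : c ≤ d) :
      a * d + b * c ≤ a * c + b * d := by
    obtain ⟨b, rfl⟩ := exists_add_of_le hab
    obtain ⟨d, rfl⟩ := exists_add_of_le hcd
    calc a * (c + d) + (a + b) * c ≤ a * (c + d) + (a + b) * c + b * d := le_self_add
      _ = a * c + (a + b) * (c + d) := by ring
  have hswap (s t : α) : p s * q t + p t * q s ≤ p s * q s + p t * q t := by
    rcases lt_trichotomy (q s) (q t) with h | h | h
    · exact rearrangement (hpq h) h.le
    · simp [h]
    · simpa only [add_comm] using rearrangement (hpq h) h.le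
  have hcross : ∫⁻ s, ∫⁻ t, (p s * q t + p t * q s) ∂μ ∂μ =
      2 * ((∫⁻ t, p t ∂μ) * ∫⁻ t, q t ∂μ) := by
    have hinner (s : α) : ∫⁻ t, (p s * q t + p t * q s) ∂μ =
        p s * ∫⁻ t, q t ∂μ + (∫⁻ t, p t ∂μ) * q s := by
      rw [lintegral_add_right' _ (by fun_prop), lintegral_const_mul'' _ hq,
        lintegral_mul_const'' _ hp]
    simp_rw [hinner]
    rw [lintegral_add_right' _ (by fun_prop), lintegral_const_mul'' _ hq,
      lintegral_mul_const'' _ hp]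
    ring
  have hdiag : ∫⁻ s, ∫⁻ t, (p s * q s + p t * q t) ∂μ ∂μ =
      2 * (μ univ * ∫⁻ t, p t * q t ∂μ) := by
    have hpq_meas : AEMeasurable (fun t ↦ p t * q t) μ := hp.mul hq
    simp_rw [lintegral_add_right' _ hpq_meas, lintegral_const]
    rw [lintegral_add_right' _ aemeasurable_const, lintegral_mul_const'' _ hpq_meas,
      lintegral_const]
    ring
  have hle := lintegral_mono (μ := μ) fun s ↦ lintegral_mono (μ := μ) (hswap s)
  rw [hcross, hdiag] at hle
  exact (ENNReal.mul_le_mul_iff_right two_ne_zero ENNReal.ofNat_ne_top).1 hle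

lemma lintegral_ofReal_eq_lintegral_Ioo_meas_lt {f : α → ℝ} {M : ℝ} (hf : AEMeasurable f μ)
    (hnn : 0 ≤ f) (hM : ∀ x, f x ≤ M) :
    ∫⁻ x, ENNReal.ofReal (f x) ∂μ = ∫⁻ t in Ioo 0 M, μ {x | t < f x} := by
  rw [lintegral_eq_lintegral_meas_lt μ (ae_of_all _ hnn) hf]
  rw [← lintegral_inter_add_sdiff _ (Ioi 0) measurableSet_Iio (B := Iio M), Ioi_inter_Iio,
    setLIntegral_eq_zero (measurableSet_Ioi.diff measurableSet_Iio), add_zero]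
  intro t ht
  simp [((hM _).trans (not_lt.1 ht.2)).not_gt]

end Chebyshev

section Entropy

/-- The differential entropy of the density `f` with respect to `μ`, with logarithms to base `b`.
It is meaningful only when `f * logb b f` is integrable, and takes the junk value `0` otherwise. -/
noncomputable def diffEntropy {α : Type*} [MeasurableSpace α] (b : ℝ) (μ : Measure α)
    (f : α → ℝ) : ℝ :=
  -∫ x, f x * Real.logb b (f x) ∂μ

/-- The density `f_X` of the first component of a pair `(X, Y)` with joint density `f`, where the
second component ranges over a space with reference measure `ν`. -/
noncomputable def marginalDensity {α β : Type*} [MeasurableSpace β] (ν : Measure β)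
    (f : α × β → ℝ) (x : α) : ℝ :=
  ∫ y, f (x, y) ∂ν

/-- The conditional differential entropy `h(Y | X) = h(X, Y) - h(X)` of a pair `(X, Y)` with joint
density `f` with respect to `μ.prod ν`, with logarithms to base `b`. -/
noncomputable def condDiffEntropy {α β : Type*} [MeasurableSpace α] [MeasurableSpace β] (b : ℝ)
    (μ : Measure α) (ν : Measure β) (f : α × β → ℝ) : ℝ :=
  diffEntropy b (μ.prod ν) f - diffEntropy b μ (marginalDensity ν f)

section Marginal

variable {α β : Type*} [MeasurableSpace β] {ν : Measure β} {f : α × β → ℝ}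

lemma marginalDensity_nonneg (hnn : 0 ≤ f) : 0 ≤ marginalDensity ν f :=
  fun _ ↦ integral_nonneg fun _ ↦ hnn _

variable [MeasurableSpace α] {μ : Measure α} [SFinite ν]

lemma integrable_marginalDensity (hf : Integrable f (μ.prod ν)) :
    Integrable (marginalDensity ν f) μ :=
  hf.integral_prod_left

variable [SFinite μ]

lemma integral_marginalDensity (hf : Integrable f (μ.prod ν)) :
    ∫ x, marginalDensity ν f x ∂μ = ∫ z, f z ∂μ.prod ν :=
  (integral_prod f hf).symm

lemma integral_envelope_pos {g : α → ℝ} (hnn : 0 ≤ f) (hpdf : ∫ z, f z ∂μ.prod ν = 1)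
    (hg : Integrable g μ) (hg0 : 0 ≤ g) (hfg : ∀ x y, f (x, y) ≤ g x) : 0 < ∫ x, g x ∂μ := by
  refine (integral_nonneg hg0).lt_of_ne' fun h ↦ ?_
  have hg_ae : g =ᵐ[μ] 0 := (integral_eq_zero_iff_of_nonneg hg0 hg).1 h
  have hmarginal : marginalDensity ν f =ᵐ[μ] 0 := by
    filter_upwards [hg_ae] with x hx
    have hfx (y : β) : f (x, y) = 0 := ((hfg x y).trans_eq hx).antisymm (hnn (x, y))
    simp [marginalDensity, hfx]
  have hf : Integrable f (μ.prod ν) := .of_integral_ne_zero (by simp [hpdf])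
  have hone := integral_marginalDensity hf
  rw [integral_congr_ae hmarginal, hpdf] at hone
  simp at hone

end Marginal

section Gibbs

variable {α : Type*} [MeasurableSpace α] {μ : Measure α} {b c s : ℝ} {φ : α → ℝ}

lemma integral_mul_logb_le (hb : 1 < b) (hnn : 0 ≤ φ) (hc : ∀ x, φ x ≤ c)
    (hφ : Integrable φ μ) (hlog : Integrable (fun x ↦ φ x * Real.logb b (φ x)) μ) :
    ∫ x, φ x * Real.logb b (φ x) ∂μ ≤ (∫ x, φ x ∂μ) * Real.logb b c := by
  rw [← integral_mul_const]
  refine integral_mono hlog (hφ.mul_const _) fun x ↦ ?_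
  rcases (hnn x).eq_or_lt with h | h
  · simp [← h]
  · exact mul_le_mul_of_nonneg_left (Real.logb_le_logb_of_le hb h (hc x)) h.le

lemma mul_logb_le_add_div_log (hb : 1 < b) {x y : ℝ} (hx : 0 ≤ x) (hy : 0 ≤ y)
    (hxy : 0 < x → 0 < y) (hs : 0 < s) :
    x * Real.logb b y ≤
      x * Real.logb b x + x * Real.logb b s + (y / s - x) / Real.log b := by
  have hlogb : 0 < Real.log b := Real.log_pos hb
  rcases hx.eq_or_lt with rfl | hx
  · simp only [zero_mul, zero_add, sub_zero]
    positivity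
  have hy' := hxy hx
  have htangent : x * (Real.log y - (Real.log s + Real.log x)) ≤ y / s - x := by
    rw [← Real.log_mul hs.ne' hx.ne', ← Real.log_div hy'.ne' (by positivity)]
    calc x * Real.log (y / (s * x)) ≤ x * (y / (s * x) - 1) := by
          gcongr
          exact Real.log_le_sub_one_of_pos (by positivity)
      _ = y / s - x := by field_simp
  simp only [Real.logb, mul_div_assoc', ← add_div]
  gcongr
  linarith

lemma integral_mul_logb_le_add_div_log (hb : 1 < b) (hnn : 0 ≤ φ) (hc0 : 0 ≤ c)
    (hc : ∀ x, φ x ≤ c) (hs : 0 < s) (hφ : Integrable φ μ)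
    (hlog : Integrable (fun x ↦ φ x * Real.logb b (φ x)) μ) :
    ∫ x, φ x * Real.logb b (φ x) ∂μ ≤
      (∫ x, φ x ∂μ) * Real.logb b (∫ x, φ x ∂μ) + (∫ x, φ x ∂μ) * Real.logb b s +
        (c / s - ∫ x, φ x ∂μ) / Real.log b := by
  refine (integral_mul_logb_le hb hnn hc hφ hlog).trans
    (mul_logb_le_add_div_log hb (integral_nonneg hnn) hc0 (fun hpos ↦ ?_) hs)
  by_contra! hcneg
  have hφ0 (x : α) : φ x = 0 := ((hc x).trans hcneg).antisymm (hnn x)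
  simp [hφ0] at hpos

end Gibbs

theorem condDiffEntropy_add_logb_integral_nonneg {α β : Type*} [MeasurableSpace α]
    [MeasurableSpace β] {μ : Measure α} [SFinite μ] {ν : Measure β} [SFinite ν] {b : ℝ}
    {f : α × β → ℝ} {g : α → ℝ} (hb : 1 < b) (hnn : 0 ≤ f) (hpdf : ∫ z, f z ∂μ.prod ν = 1)
    (hlog : Integrable (fun z ↦ f z * Real.logb b (f z)) (μ.prod ν))
    (hlog_marginal : Integrable
      (fun x ↦ marginalDensity ν f x * Real.logb b (marginalDensity ν f x)) μ)
    (hg : Integrable g μ) (hg0 : 0 ≤ g) (hfg : ∀ x y, f (x, y) ≤ g x) :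
    0 ≤ condDiffEntropy b μ ν f + Real.logb b (∫ x, g x ∂μ) := by
  set F := marginalDensity ν f
  set S := ∫ x, g x ∂μ with hS
  have hf : Integrable f (μ.prod ν) := .of_integral_ne_zero (by simp [hpdf])
  have hFint : Integrable F μ := integrable_marginalDensity hf
  have hFone : ∫ x, F x ∂μ = 1 := (integral_marginalDensity hf).trans hpdf
  have hSpos : 0 < S := integral_envelope_pos hnn hpdf hg hg0 hfg
  have hgS : Integrable (fun x ↦ g x / S) μ := hg.div_const S
  have hgF : Integrable (fun x ↦ (g x / S - F x) / Real.log b) μ := (hgS.sub hFint).div_const _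
  have hFS : Integrable (fun x ↦ F x * Real.logb b (F x) + F x * Real.logb b S) μ :=
    hlog_marginal.add (hFint.mul_const _)
  have hfiber : ∀ᵐ x ∂μ, ∫ y, f (x, y) * Real.logb b (f (x, y)) ∂ν ≤
      F x * Real.logb b (F x) + F x * Real.logb b S + (g x / S - F x) / Real.log b := by
    filter_upwards [hf.prod_right_ae, hlog.prod_right_ae] with x hfx hlogx
    exact integral_mul_logb_le_add_div_log hb (fun y ↦ hnn (x, y)) (hg0 x) (hfg x) hSpos hfx hlogx
  have hle : ∫ z, f z * Real.logb b (f z) ∂μ.prod ν ≤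
      ∫ x, F x * Real.logb b (F x) ∂μ + Real.logb b S :=
    calc ∫ z, f z * Real.logb b (f z) ∂μ.prod ν
        = ∫ x, ∫ y, f (x, y) * Real.logb b (f (x, y)) ∂ν ∂μ := integral_prod _ hlog
      _ ≤ ∫ x, (F x * Real.logb b (F x) + F x * Real.logb b S +
            (g x / S - F x) / Real.log b) ∂μ :=
          integral_mono_ae hlog.integral_prod_left (hFS.add hgF) hfiber
      _ = ∫ x, F x * Real.logb b (F x) ∂μ + Real.logb b S := by
          rw [integral_add hFS hgF, integral_add hlog_marginal (hFint.mul_const _),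
            integral_mul_const, integral_div, integral_sub hgS hFint, integral_div,
            hFone, ← hS, div_self hSpos.ne', sub_self, zero_div, add_zero, one_mul]
  rw [condDiffEntropy, diffEntropy, diffEntropy]
  linarith

end Entropy

lemma le_natCast_of_one_add_mul_le_inv_pow {a : ℝ} {n : ℕ}
    (h : ∀ l ∈ Ioo (0 : ℝ) 1, 1 + (1 - l) * a ≤ (l ^ n)⁻¹) : a ≤ n := by
  have hbernoulli : ∀ l ∈ Ioo (0 : ℝ) 1, l ^ n * a ≤ n := by
    intro l hl
    have hpow : 1 - n * (1 - l) ≤ l ^ n := by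
      have := one_add_mul_le_pow (a := l - 1) (by linarith [hl.1]) n
      rw [add_sub_cancel] at this
      linarith
    have hmul : l ^ n * (1 + (1 - l) * a) ≤ 1 :=
      (le_inv_mul_iff₀ (pow_pos hl.1 n)).1 (by simpa using h l hl)
    refine le_of_mul_le_mul_left (a := 1 - l) ?_ (sub_pos.2 hl.2)
    linarith
  have hlim : Filter.Tendsto (fun l : ℝ ↦ l ^ n * a) (nhdsWithin 1 (Iio 1)) (nhds a) := by
    have : ContinuousWithinAt (fun l : ℝ ↦ l ^ n * a) (Iio 1) 1 := by fun_prop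
    simpa using this.tendsto
  exact le_of_tendsto hlim
    (Filter.mem_of_superset (Ioo_mem_nhdsLT zero_lt_one) hbernoulli)

lemma integral_comp_smul_add {E : Type*} [NormedAddCommGroup E] [NormedSpace ℝ E]
    [FiniteDimensional ℝ E] [MeasurableSpace E] [BorelSpace E] {G : Type*}
    [NormedAddCommGroup G] [NormedSpace ℝ G] (μ : Measure E) [μ.IsAddHaarMeasure] (f : E → G)
    {l : ℝ} (hl : 0 ≤ l) (v : E) :
    ∫ x, f (l • x + v) ∂μ = (l ^ finrank ℝ E)⁻¹ • ∫ x, f x ∂μ := by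
  rw [Measure.integral_comp_smul_of_nonneg μ (fun x ↦ f (x + v)) l (hR := hl),
    integral_add_right_eq_self]

lemma apply_le_iSup_section {α β : Type*} {f : α × β → ℝ} {M : ℝ} (hM : ∀ z, f z ≤ M)
    (x : α) (y : β) : f (x, y) ≤ ⨆ y', f (x, y') :=
  le_ciSup (f := fun y' ↦ f (x, y')) ⟨M, forall_mem_range.2 fun _ ↦ hM _⟩ y

namespace LogConcaveDens

lemma convex_setOf_lt {E : Type*} [AddCommGroup E] [Module ℝ E] {f : E → ℝ}
    (hf : LogConcaveDens f) {t : ℝ} (ht : 0 < t) : Convex ℝ {z | t < f z} := by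
  rw [convex_iff_forall_pos]
  intro x hx y hy a c ha hc hac
  obtain rfl : c = 1 - a := by linarith
  calc t = t ^ a * t ^ (1 - a) := by rw [← Real.rpow_add ht, hac, Real.rpow_one]
    _ < f x ^ a * f y ^ (1 - a) :=
        mul_lt_mul'' (Real.rpow_lt_rpow ht.le hx ha) (Real.rpow_lt_rpow ht.le hy hc)
          (by positivity) (by positivity)
    _ ≤ f (a • x + (1 - a) • y) := hf x y a ⟨ha.le, by linarith⟩

lemma add_mul_logb_sub_logb_le {E : Type*} [AddCommGroup E] [Module ℝ E] {f : E → ℝ}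
    (hf : LogConcaveDens f) (hnn : 0 ≤ f) {b : ℝ} (hb : 1 < b) {z : E} (hz : 0 < f z) (x : E)
    {l : ℝ} (hl : l ∈ Icc (0 : ℝ) 1) :
    f x + (1 - l) * Real.log b * (f x * Real.logb b (f z) - f x * Real.logb b (f x)) ≤
      f (l • x + (1 - l) • z) := by
  rcases (hnn x).eq_or_lt with hx | (hx : 0 < f x)
  · simpa [← hx] using hnn _
  have hlogb : Real.log b ≠ 0 := (Real.log_pos hb).ne'
  calc f x + (1 - l) * Real.log b * (f x * Real.logb b (f z) - f x * Real.logb b (f x))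
      = f x * ((1 - l) * (Real.log (f z) - Real.log (f x)) + 1) := by
        simp only [Real.logb]
        field_simp
        ring
    _ ≤ f x * Real.exp ((1 - l) * (Real.log (f z) - Real.log (f x))) := by
        gcongr
        exact Real.add_one_le_exp _
    _ = f x ^ l * f z ^ (1 - l) := by
        nth_rw 1 [← Real.exp_log hx]
        rw [Real.rpow_def_of_pos hx, Real.rpow_def_of_pos hz, ← Real.exp_add, ← Real.exp_add]
        ring_nf
    _ ≤ f (l • x + (1 - l) • z) := hf x z l hl

section Peak

variable {E : Type*} [NormedAddCommGroup E] [NormedSpace ℝ E] [FiniteDimensional ℝ E]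
  [MeasurableSpace E] [BorelSpace E] {μ : Measure E} [μ.IsAddHaarMeasure] {f : E → ℝ} {b : ℝ}

lemma logb_apply_add_diffEntropy_le (hf : LogConcaveDens f) (hnn : 0 ≤ f)
    (hpdf : ∫ x, f x ∂μ = 1) (hb : 1 < b) (hlog : Integrable (fun x ↦ f x * Real.logb b (f x)) μ)
    {z : E} (hz : 0 < f z) :
    Real.logb b (f z) + diffEntropy b μ f ≤ finrank ℝ E * Real.logb b (Real.exp 1) := by
  have hint : Integrable f μ := .of_integral_ne_zero (by simp [hpdf])
  suffices Real.log b * (Real.logb b (f z) + diffEntropy b μ f) ≤ finrank ℝ E by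
    rwa [← Real.log_div_log (x := Real.exp 1), Real.log_exp, mul_one_div,
      le_div_iff₀' (Real.log_pos hb)]
  refine le_natCast_of_one_add_mul_le_inv_pow fun l hl ↦ ?_
  have hdiff : Integrable (fun x ↦ (1 - l) * Real.log b *
      (f x * Real.logb b (f z) - f x * Real.logb b (f x))) μ :=
    ((hint.mul_const _).sub hlog).const_mul _
  have hcomp : Integrable (fun x ↦ f (l • x + (1 - l) • z)) μ :=
    (hint.comp_add_right ((1 - l) • z)).comp_smul hl.1.ne'
  calc 1 + (1 - l) * (Real.log b * (Real.logb b (f z) + diffEntropy b μ f))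
      = ∫ x, (f x + (1 - l) * Real.log b *
          (f x * Real.logb b (f z) - f x * Real.logb b (f x))) ∂μ := by
        rw [integral_add hint hdiff, integral_const_mul, integral_sub (hint.mul_const _) hlog,
          integral_mul_const, hpdf, diffEntropy]
        ring
    _ ≤ ∫ x, f (l • x + (1 - l) • z) ∂μ :=
        integral_mono (hint.add hdiff) hcomp fun x ↦
          hf.add_mul_logb_sub_logb_le hnn hb hz x (Ioo_subset_Icc_self hl)
    _ = (l ^ finrank ℝ E)⁻¹ := by
        rw [integral_comp_smul_add μ f hl.1.le, hpdf, smul_eq_mul, mul_one]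

lemma apply_le_rpow (hf : LogConcaveDens f) (hnn : 0 ≤ f)
    (hpdf : ∫ x, f x ∂μ = 1) (hb : 1 < b) (hlog : Integrable (fun x ↦ f x * Real.logb b (f x)) μ)
    (z : E) :
    f z ≤ b ^ (finrank ℝ E * Real.logb b (Real.exp 1) - diffEntropy b μ f) := by
  have hb0 : 0 < b := zero_lt_one.trans hb
  rcases (hnn z).eq_or_lt with hz | hz
  · rw [← hz]
    exact Real.rpow_nonneg hb0.le _
  · rw [← Real.logb_le_iff_le_rpow hb hz]
    linarith [hf.logb_apply_add_diffEntropy_le hnn hpdf hb hlog hz]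

end Peak

section Marginal

variable {E F : Type*}
  [NormedAddCommGroup E] [NormedSpace ℝ E] [FiniteDimensional ℝ E] [MeasurableSpace E]
  [BorelSpace E] {μ : Measure E} [μ.IsAddHaarMeasure]
  [NormedAddCommGroup F] [NormedSpace ℝ F] [FiniteDimensional ℝ F] [MeasurableSpace F]
  [BorelSpace F] {ν : Measure F} [ν.IsAddHaarMeasure]
  {f : E × F → ℝ} {M b : ℝ}

lemma lintegral_iSup_mul_lintegral_section_le (hf : LogConcaveDens f) (hnn : 0 ≤ f)
    (hmeas : Measurable f) (hsup : AEMeasurable (fun x ↦ ⨆ y, f (x, y)) μ) (hM : ∀ z, f z ≤ M)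
    (x₀ : E) :
    (∫⁻ x, ENNReal.ofReal (⨆ y, f (x, y)) ∂μ) * ∫⁻ y, ENNReal.ofReal (f (x₀, y)) ∂ν ≤
      ENNReal.ofReal M * ((finrank ℝ E + finrank ℝ F).choose (finrank ℝ E) *
        ∫⁻ z, ENNReal.ofReal (f z) ∂μ.prod ν) := by
  set C : ℝ≥0∞ := (((finrank ℝ E + finrank ℝ F).choose (finrank ℝ E) : ℕ) : ℝ≥0∞)
  set p : ℝ → ℝ≥0∞ := fun t ↦ μ {x | t < ⨆ y, f (x, y)}
  set q : ℝ → ℝ≥0∞ := fun t ↦ ν {y | t < f (x₀, y)}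
  have hp : Antitone p := fun s t hst ↦ measure_mono fun x hx ↦ hst.trans_lt hx
  have hq : Antitone q := fun s t hst ↦ measure_mono fun y hy ↦ hst.trans_lt hy
  have hlevel : ∀ t ∈ Ioo 0 M, p t * q t ≤ C * μ.prod ν {z | t < f z} := by
    intro t ht
    calc p t * q t ≤ μ (Prod.fst '' {z | t < f z}) * ν (Prod.mk x₀ ⁻¹' {z | t < f z}) := by
          refine mul_le_mul_left (measure_mono fun x hx ↦ ?_) _
          obtain ⟨y, hy⟩ := exists_lt_of_lt_ciSup (mem_ofPred_eq ▸ hx)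
          exact ⟨(x, y), hy, rfl⟩
      _ ≤ _ := measure_image_fst_mul_measure_section_le (hf.convex_setOf_lt ht.1)
          (measurableSet_lt measurable_const hmeas) x₀
  rw [lintegral_ofReal_eq_lintegral_Ioo_meas_lt hsup (fun x ↦ Real.iSup_nonneg fun y ↦ hnn _)
      (fun x ↦ ciSup_le fun y ↦ hM _),
    lintegral_ofReal_eq_lintegral_Ioo_meas_lt (f := fun y ↦ f (x₀, y))
      (hmeas.comp measurable_prodMk_left).aemeasurable (fun y ↦ hnn _) (fun y ↦ hM _),
    lintegral_ofReal_eq_lintegral_Ioo_meas_lt hmeas.aemeasurable hnn hM]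
  calc (∫⁻ t in Ioo 0 M, p t) * ∫⁻ t in Ioo 0 M, q t
      ≤ ENNReal.ofReal M * ∫⁻ t in Ioo 0 M, p t * q t := by
        simpa using lintegral_mul_lintegral_le_measure_univ_mul_of_monovary
          (μ := volume.restrict (Ioo 0 M)) hp.measurable.aemeasurable hq.measurable.aemeasurable
          (hp.monovary hq)
    _ ≤ ENNReal.ofReal M * (C * ∫⁻ t in Ioo 0 M, μ.prod ν {z | t < f z}) := by
        rw [← lintegral_const_mul' C _ (by finiteness)]
        gcongr _ * ?_
        exact setLIntegral_mono' measurableSet_Ioo hlevel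

lemma integral_iSup_mul_marginalDensity_le (hf : LogConcaveDens f) (hnn : 0 ≤ f)
    (hmeas : Measurable f) (hint : Integrable f (μ.prod ν))
    (hsup : Integrable (fun x ↦ ⨆ y, f (x, y)) μ) (hM : ∀ z, f z ≤ M) (x : E) :
    (∫ x, ⨆ y, f (x, y) ∂μ) * marginalDensity ν f x ≤
      M * ((finrank ℝ E + finrank ℝ F).choose (finrank ℝ E) * ∫ z, f z ∂μ.prod ν) := by
  have hM0 : 0 ≤ M := (hnn 0).trans (hM 0)
  have hsup0 : 0 ≤ fun x ↦ ⨆ y, f (x, y) := fun x ↦ Real.iSup_nonneg fun y ↦ hnn _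
  have hfiber : ENNReal.ofReal (marginalDensity ν f x) ≤ ∫⁻ y, ENNReal.ofReal (f (x, y)) ∂ν := by
    by_cases hi : Integrable (fun y ↦ f (x, y)) ν
    · exact (ofReal_integral_eq_lintegral_ofReal hi (ae_of_all _ fun y ↦ hnn (x, y))).le
    · simp [marginalDensity, integral_undef hi]
  have hrhs0 : 0 ≤ M * ((finrank ℝ E + finrank ℝ F).choose (finrank ℝ E) *
      ∫ z, f z ∂μ.prod ν) :=
    mul_nonneg hM0 (mul_nonneg (Nat.cast_nonneg _) (integral_nonneg hnn))
  rw [← ENNReal.ofReal_le_ofReal_iff hrhs0, ENNReal.ofReal_mul (integral_nonneg hsup0),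
    ENNReal.ofReal_mul hM0,
    ENNReal.ofReal_mul (Nat.cast_nonneg _), ENNReal.ofReal_natCast,
    ofReal_integral_eq_lintegral_ofReal hsup (ae_of_all _ hsup0),
    ofReal_integral_eq_lintegral_ofReal hint (ae_of_all _ hnn)]
  calc _ ≤ (∫⁻ x, ENNReal.ofReal (⨆ y, f (x, y)) ∂μ) * ∫⁻ y, ENNReal.ofReal (f (x, y)) ∂ν := by
        gcongr
    _ ≤ _ := hf.lintegral_iSup_mul_lintegral_section_le hnn hmeas hsup.aemeasurable hM x

theorem condDiffEntropy_add_logb_integral_iSup_le (hf : LogConcaveDens f) (hb : 1 < b)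
    (hnn : 0 ≤ f) (hmeas : Measurable f) (hpdf : ∫ z, f z ∂μ.prod ν = 1)
    (hlog : Integrable (fun z ↦ f z * Real.logb b (f z)) (μ.prod ν))
    (hlog_marginal : Integrable
      (fun x ↦ marginalDensity ν f x * Real.logb b (marginalDensity ν f x)) μ)
    (hsup : Integrable (fun x ↦ ⨆ y, f (x, y)) μ) :
    condDiffEntropy b μ ν f + Real.logb b (∫ x, ⨆ y, f (x, y) ∂μ) ≤
      (finrank ℝ E + finrank ℝ F) * Real.logb b (Real.exp 1) +
        Real.logb b ((finrank ℝ E + finrank ℝ F).choose (finrank ℝ E)) := by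
  set S := ∫ x, ⨆ y, f (x, y) ∂μ
  set C : ℝ := (((finrank ℝ E + finrank ℝ F).choose (finrank ℝ E) : ℕ) : ℝ)
  set e : ℝ := (finrank ℝ E + finrank ℝ F) * Real.logb b (Real.exp 1) -
    diffEntropy b (μ.prod ν) f with he
  have hb0 : 0 < b := zero_lt_one.trans hb
  have hint : Integrable f (μ.prod ν) := .of_integral_ne_zero (by simp [hpdf])
  have hpeak (z : E × F) : f z ≤ b ^ e := by
    simpa [he] using hf.apply_le_rpow hnn hpdf hb hlog z
  have hSpos : 0 < S := integral_envelope_pos hnn hpdf hsup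
    (fun x ↦ Real.iSup_nonneg fun y ↦ hnn (x, y)) (apply_le_iSup_section hpeak)
  have hCpos : 0 < C := Nat.cast_pos.2 (Nat.choose_pos (Nat.le_add_right _ _))
  have hmarginal (x : E) : marginalDensity ν f x ≤ b ^ e * C / S := by
    rw [le_div_iff₀' hSpos]
    simpa [hpdf] using hf.integral_iSup_mul_marginalDensity_le hnn hmeas hint hsup hpeak x
  have hentropy : -diffEntropy b μ (marginalDensity ν f) ≤ e + Real.logb b C - Real.logb b S :=
    calc -diffEntropy b μ (marginalDensity ν f)
        = ∫ x, marginalDensity ν f x * Real.logb b (marginalDensity ν f x) ∂μ := neg_neg _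
      _ ≤ (∫ x, marginalDensity ν f x ∂μ) * Real.logb b (b ^ e * C / S) :=
          integral_mul_logb_le hb (marginalDensity_nonneg hnn) hmarginal
            (integrable_marginalDensity hint) hlog_marginal
      _ = e + Real.logb b C - Real.logb b S := by
          rw [integral_marginalDensity hint, hpdf, one_mul,
            Real.logb_div (by positivity) hSpos.ne', Real.logb_mul (by positivity) hCpos.ne',
            Real.logb_rpow hb0 hb.ne']
  rw [condDiffEntropy]
  linarith

end Marginal

end LogConcaveDens

theorem logconcave_conditional_entropy_bound_general {E F : Type*}
    [NormedAddCommGroup E] [NormedSpace ℝ E] [FiniteDimensional ℝ E] [MeasurableSpace E]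
    [BorelSpace E] {μ : Measure E} [μ.IsAddHaarMeasure]
    [NormedAddCommGroup F] [NormedSpace ℝ F] [FiniteDimensional ℝ F] [MeasurableSpace F]
    [BorelSpace F] {ν : Measure F} [ν.IsAddHaarMeasure]
    {f : E × F → ℝ} {b : ℝ} (hf : LogConcaveDens f) (hb : 1 < b)
    (hnn : 0 ≤ f) (hmeas : Measurable f) (hpdf : ∫ z, f z ∂μ.prod ν = 1)
    (hlog : Integrable (fun z ↦ f z * Real.logb b (f z)) (μ.prod ν))
    (hlog_marginal : Integrable
      (fun x ↦ marginalDensity ν f x * Real.logb b (marginalDensity ν f x)) μ)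
    (hsup : Integrable (fun x ↦ ⨆ y, f (x, y)) μ) :
    0 ≤ condDiffEntropy b μ ν f + Real.logb b (∫ x, ⨆ y, f (x, y) ∂μ) ∧
      condDiffEntropy b μ ν f + Real.logb b (∫ x, ⨆ y, f (x, y) ∂μ) ≤
        (finrank ℝ E + finrank ℝ F) * Real.logb b (Real.exp 1) +
          Real.logb b ((finrank ℝ E + finrank ℝ F).choose (finrank ℝ E)) :=
  ⟨condDiffEntropy_add_logb_integral_nonneg hb hnn hpdf hlog hlog_marginal hsup
      (fun x ↦ Real.iSup_nonneg fun y ↦ hnn (x, y))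
      (apply_le_iSup_section (hf.apply_le_rpow hnn hpdf hb hlog)),
    hf.condDiffEntropy_add_logb_integral_iSup_le hb hnn hmeas hpdf hlog hlog_marginal hsup⟩

theorem logconcave_conditional_entropy_bound (m k : ℕ) (hm : 1 ≤ m)
    (f : (Fin m → ℝ) × (Fin k → ℝ) → ℝ)
    (hmeas : Measurable f) (hnn : ∀ x, 0 ≤ f x) (hpdf : ∫ x, f x = 1)
    (hlc : LogConcaveDens f)
    (hint₁ : Integrable (fun x => f x * Real.logb 2 (f x)))
    (hint₂ : Integrable (fun x : Fin m → ℝ =>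
      (∫ y, f (x, y)) * Real.logb 2 (∫ y, f (x, y))))
    (hsupint : Integrable (fun x : Fin m → ℝ => ⨆ y, f (x, y)))
    (hbdd : BddAbove (Set.range f)) :
    0 ≤ ((-∫ x, f x * Real.logb 2 (f x))
          - (-∫ x : Fin m → ℝ, (∫ y, f (x, y)) * Real.logb 2 (∫ y, f (x, y))))
        + Real.logb 2 (∫ x : Fin m → ℝ, ⨆ y, f (x, y)) ∧
    ((-∫ x, f x * Real.logb 2 (f x))
          - (-∫ x : Fin m → ℝ, (∫ y, f (x, y)) * Real.logb 2 (∫ y, f (x, y))))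
        + Real.logb 2 (∫ x : Fin m → ℝ, ⨆ y, f (x, y))
      ≤ (m + k) * Real.logb 2 (Real.exp 1) + Real.logb 2 ((m + k).choose m) := by
  simpa [condDiffEntropy, diffEntropy, marginalDensity, Measure.volume_eq_prod] using
    logconcave_conditional_entropy_bound_general (μ := volume) (ν := volume) hlc one_lt_two hnn
      hmeas hpdf hint₁ hint₂ hsupint
end
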